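/- arXiv:2601.21580 — 3 statements merged into one kernel-verified Lean document; each statement's English description precedes it below -/
import Mathlib

section
/- Let K_n be the complete graph on n ≥ 2 vertices and let D ⊆ V(K_n). Then Ψ_D(K_n) = n − |D| if n = 2 or D = V(K_n), and Ψ_D(K_n) = n − 1 − |D| if n > 2 and D ≠ V(K_n). -/
open SimpleGraph

variable {V : Type*}

/-- `S` is a doubly resolving set of `G`: every pair of distinct vertices is doubly
resolved by some pair of vertices of `S`. -/
def IsDoublyResolvingSet (G : SimpleGraph V) (S : Set V) : Prop :=
  ∀ u v : V, u ≠ v → ∃ x ∈ S, ∃ y ∈ S,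
    (G.dist u x : ℤ) - (G.dist u y : ℤ) ≠ (G.dist v x : ℤ) - (G.dist v y : ℤ)

/-- `Ψ(G)`: the minimum cardinality of a doubly resolving set of `G`. -/
noncomputable def psi (G : SimpleGraph V) : ℕ :=
  sInf {n | ∃ S : Set V, IsDoublyResolvingSet G S ∧ S.ncard = n}

/-- The degree of a vertex, as the cardinality of its neighbor set. -/
noncomputable def deg (G : SimpleGraph V) (v : V) : ℕ := (G.neighborSet v).ncard

/-- The maximum degree `Δ(G)`. -/
noncomputable def maxDeg (G : SimpleGraph V) : ℕ := sSup (Set.range (deg G))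
/-- `Ψ_D(G)`: the minimum of `|S| - |D|` over all doubly resolving sets `S` of `G`
containing `D`. -/
noncomputable def psiD (G : SimpleGraph V) (D : Set V) : ℕ :=
  sInf {n | ∃ S : Set V, D ⊆ S ∧ IsDoublyResolvingSet G S ∧ S.ncard = n + D.ncard}

/-!
In `K_n` all distances between distinct vertices are `1`, so a vertex outside `S` is at distance `1`
from every member of `S`; hence a doubly resolving set omits at most one vertex. It also has at
least two members, since a pair `x, x` resolves nothing. Conversely these two properties suffice:
if `u, y ∈ S` are distinct and `v ≠ u`, then `d(u,u) - d(u,y) = -1 < 0 ≤ d(v,u) - d(v,y)`.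
-/

namespace IsDoublyResolvingSet

variable {G : SimpleGraph V} {S : Set V}

theorem nontrivial [Nontrivial V] (hS : IsDoublyResolvingSet G S) : S.Nontrivial := by
  obtain ⟨u, v, huv⟩ := exists_pair_ne V
  obtain ⟨x, hx, y, hy, hxy⟩ := hS u v huv
  refine ⟨x, hx, y, hy, ?_⟩
  rintro rfl
  exact hxy (by rw [sub_self, sub_self])

theorem eq_of_forall_dist_eq (hS : IsDoublyResolvingSet G S) {u v : V}
    (h : ∀ x ∈ S, G.dist u x = G.dist v x) : u = v := by
  by_contra huv
  obtain ⟨x, hx, y, hy, hxy⟩ := hS u v huv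
  exact hxy (by rw [h x hx, h y hy])

end IsDoublyResolvingSet

theorem isDoublyResolvingSet_univ {G : SimpleGraph V} (hG : G.Preconnected) :
    IsDoublyResolvingSet G Set.univ := by
  intro u v huv
  have hpos : 0 < G.dist u v := (hG u v).pos_dist_of_ne huv
  refine ⟨u, Set.mem_univ u, v, Set.mem_univ v, ?_⟩
  rw [dist_self, dist_self, dist_comm (u := v)]
  lia

theorem IsDoublyResolvingSet.subsingleton_compl_of_top {S : Set V}
    (hS : IsDoublyResolvingSet (⊤ : SimpleGraph V) S) : Sᶜ.Subsingleton := by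
  intro u hu v hv
  refine hS.eq_of_forall_dist_eq fun x hx ↦ ?_
  rw [dist_top_of_ne (ne_of_mem_of_not_mem hx hu).symm,
    dist_top_of_ne (ne_of_mem_of_not_mem hx hv).symm]

theorem isDoublyResolvingSet_top_of_subsingleton_compl {S : Set V} (hS : S.Nontrivial)
    (hSc : Sᶜ.Subsingleton) : IsDoublyResolvingSet (⊤ : SimpleGraph V) S := by
  classical
  intro u v huv
  wlog hu : u ∈ S generalizing u v
  · have hv : v ∈ S := by
      by_contra hv
      exact huv (hSc hu hv)
    obtain ⟨x, hx, y, hy, hxy⟩ := this v u huv.symm hv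
    exact ⟨x, hx, y, hy, hxy.symm⟩
  obtain ⟨y, hy, hyu⟩ := hS.exists_ne u
  refine ⟨u, hu, y, hy, ?_⟩
  have hvy : (⊤ : SimpleGraph V).dist v y ≤ 1 := by
    rw [dist_top]
    split_ifs <;> simp
  rw [dist_self, dist_top_of_ne hyu.symm, dist_top_of_ne huv.symm]
  lia

theorem psiD_eq_ncard_sub_ncard {G : SimpleGraph V} {D S : Set V} (hfin : S.Finite) (hDS : D ⊆ S)
    (hS : IsDoublyResolvingSet G S)
    (hmin : ∀ T, D ⊆ T → IsDoublyResolvingSet G T → S.ncard ≤ T.ncard) :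
    psiD G D = S.ncard - D.ncard := by
  have hle : D.ncard ≤ S.ncard := Set.ncard_le_ncard hDS hfin
  refine IsLeast.csInf_eq ⟨⟨S, hDS, hS, by lia⟩, ?_⟩
  rintro m ⟨T, hDT, hT, hm⟩
  have hST : S.ncard ≤ T.ncard := hmin T hDT hT
  lia

theorem psiD_univ [Finite V] {G : SimpleGraph V} (hG : G.Preconnected) :
    psiD G Set.univ = 0 := by
  rw [psiD_eq_ncard_sub_ncard Set.finite_univ subset_rfl (isDoublyResolvingSet_univ hG)
    fun T hT _ ↦ Set.ncard_le_ncard hT, Nat.sub_self]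

theorem psiD_top_of_card_eq_two (hV : Nat.card V = 2) (D : Set V) :
    psiD (⊤ : SimpleGraph V) D = Nat.card V - D.ncard := by
  have : Finite V := Nat.finite_of_card_ne_zero (by lia)
  have : Nontrivial V := Finite.one_lt_card_iff_nontrivial.mp (by lia)
  rw [← Set.ncard_univ V]
  refine psiD_eq_ncard_sub_ncard Set.finite_univ D.subset_univ
    (isDoublyResolvingSet_univ preconnected_top) fun T _ hT ↦ ?_
  rw [Set.ncard_univ, hV]
  exact Set.one_lt_ncard_iff_nontrivial.mpr hT.nontrivial

theorem psiD_top_of_ne_univ (hV : 2 < Nat.card V) {D : Set V} (hD : D ≠ Set.univ) :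
    psiD (⊤ : SimpleGraph V) D = Nat.card V - 1 - D.ncard := by
  have : Finite V := Nat.finite_of_card_ne_zero (by lia)
  obtain ⟨a, ha⟩ := (Set.ne_univ_iff_exists_notMem D).mp hD
  have hcard : ({a}ᶜ : Set V).ncard = Nat.card V - 1 := by
    rw [Set.ncard_compl, Set.ncard_singleton]
  have hnontrivial : ({a}ᶜ : Set V).Nontrivial :=
    Set.one_lt_ncard_iff_nontrivial.mp (by lia)
  have hresolving : IsDoublyResolvingSet (⊤ : SimpleGraph V) {a}ᶜ :=
    isDoublyResolvingSet_top_of_subsingleton_compl hnontrivial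
      ((compl_compl ({a} : Set V)).symm ▸ Set.subsingleton_singleton)
  rw [← hcard]
  refine psiD_eq_ncard_sub_ncard (Set.toFinite _) (Set.subset_compl_singleton_iff.mpr ha)
    hresolving fun T _ hT ↦ ?_
  have hTc : Tᶜ.ncard ≤ 1 := Set.ncard_le_one_iff_subsingleton.mpr hT.subsingleton_compl_of_top
  have hT_add : T.ncard + Tᶜ.ncard = Nat.card V := Set.ncard_add_ncard_compl T
  lia

theorem psiD_completeGraph_general [Finite V] (D : Set V) :
    (Nat.card V = 2 ∨ D = Set.univ → psiD (completeGraph V) D = Nat.card V - D.ncard) ∧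
    (2 < Nat.card V ∧ D ≠ Set.univ → psiD (completeGraph V) D = Nat.card V - 1 - D.ncard) := by
  refine ⟨?_, fun ⟨hV, hD⟩ ↦ psiD_top_of_ne_univ hV hD⟩
  rintro (hV | rfl)
  · exact psiD_top_of_card_eq_two hV D
  · rw [Set.ncard_univ, Nat.sub_self]
    exact psiD_univ preconnected_top

/-- For the complete graph `K_n` with `n ≥ 2` and any `D ⊆ V(K_n)`:
`Ψ_D(K_n) = n - |D|` if `n = 2` or `D = V(K_n)`, and `Ψ_D(K_n) = n - 1 - |D|` if `n > 2`
and `D ≠ V(K_n)`. -/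
theorem psiD_completeGraph (n : ℕ) (hn : 2 ≤ n) (D : Set (Fin n)) :
    (n = 2 ∨ D = Set.univ → psiD (completeGraph (Fin n)) D = n - D.ncard) ∧
    (2 < n ∧ D ≠ Set.univ → psiD (completeGraph (Fin n)) D = n - 1 - D.ncard) := by
  simpa only [Nat.card_fin] using psiD_completeGraph_general D
end

section
/- Let T be a tree with at least two vertices. Then Ψ(T) = σ(T), i.e., the minimum cardinality of a doubly resolving set of T equals the number of leaves of T. -/
open SimpleGraph

variable {V : Type*}

/-!
A leaf and its neighbor `w` are not doubly resolved by any two vertices other than the leaf: every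
path out of the leaf passes through `w`, so the distances from the leaf and from `w` to such a
vertex differ by exactly one. Hence every doubly resolving set contains all leaves.

Conversely, given `u ≠ v` in a finite tree, extend the path from `v` to `u` beyond `u` until it
ends at a leaf `x`, and likewise the path from `u` to `v` beyond `v` to a leaf `y`. Then
`d(u, x) - d(v, x) = -d(u, v)` while `d(u, y) - d(v, y) = d(u, v)`, so `x` and `y` doubly resolve
`u` and `v`.
-/

section

variable {G : SimpleGraph V} {l u v w x : V} {S : Set V}

lemma deg_eq_one_iff_existsUnique_adj : deg G v = 1 ↔ ∃! w, G.Adj v w := by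
  simp [deg, Set.ncard_eq_one, Set.eq_singleton_iff_unique_mem, ExistsUnique]

lemma dist_eq_dist_neighbor_add_one_of_deg_eq_one (hl : deg G l = 1) (hlw : G.Adj l w)
    (hlx : G.Reachable l x) (hne : l ≠ x) : G.dist l x = G.dist w x + 1 := by
  have neighbor_closer : G.dist w x + 1 ≤ G.dist l x := by
    obtain ⟨p, hp⟩ := hlx.exists_walk_length_eq_dist
    cases p with
    | nil => exact absurd rfl hne
    | cons hadj q =>
      obtain rfl := (deg_eq_one_iff_existsUnique_adj.1 hl).unique hlw hadj
      rw [← hp, Walk.length_cons]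
      exact Nat.add_le_add_right (dist_le q) 1
  have triangle : G.dist l x ≤ G.dist l w + G.dist w x := hlw.reachable.dist_triangle_left x
  have dist_lw : G.dist l w = 1 := dist_eq_one_iff_adj.2 hlw
  omega

lemma IsDoublyResolvingSet.mem_of_deg_eq_one (hS : IsDoublyResolvingSet G S)
    (hG : G.Preconnected) (hl : deg G l = 1) : l ∈ S := by
  by_contra hlS
  obtain ⟨w, hlw⟩ := (deg_eq_one_iff_existsUnique_adj.1 hl).exists
  have dist_shift (z : V) (hz : z ∈ S) : G.dist l z = G.dist w z + 1 :=
    dist_eq_dist_neighbor_add_one_of_deg_eq_one hl hlw (hG l z) (ne_of_mem_of_not_mem hz hlS).symm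
  obtain ⟨x, hx, y, hy, hxy⟩ := hS l w hlw.ne
  have := dist_shift x hx
  have := dist_shift y hy
  omega

lemma eq_of_adj_of_dist_eq_dist_add_one (hG : G.IsAcyclic) (hu : G.Adj u x) (hw : G.Adj w x)
    (hvu : G.dist v x = G.dist v u + 1) (hvw : G.dist v x = G.dist v w + 1) : u = w := by
  have hvx : G.Reachable v x := .of_dist_ne_zero (by omega)
  obtain ⟨p, hp⟩ := (hvx.trans hu.symm.reachable).exists_walk_length_eq_dist
  obtain ⟨q, hq⟩ := (hvx.trans hw.symm.reachable).exists_walk_length_eq_dist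
  have p_isPath : (p.concat hu).IsPath :=
    Walk.isPath_of_length_eq_dist _ (by rw [Walk.length_concat, hp, hvu])
  have q_isPath : (q.concat hw).IsPath :=
    Walk.isPath_of_length_eq_dist _ (by rw [Walk.length_concat, hq, hvw])
  have concat_eq : p.concat hu = q.concat hw :=
    congrArg Subtype.val ((hG.subsingleton_path v x).elim ⟨_, p_isPath⟩ ⟨_, q_isPath⟩)
  simpa only [Walk.penultimate_concat] using congrArg Walk.penultimate concat_eq

lemma deg_eq_one_of_forall_adj_dist_le (hG : G.IsAcyclic) (hvx : G.Reachable v x) (hne : v ≠ x)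
    (hmax : ∀ w, G.Adj w x → G.dist v w ≤ G.dist v x) : deg G x = 1 := by
  have neighbor_closer (w : V) (hw : G.Adj w x) : G.dist v x = G.dist v w + 1 := by
    have := hmax w hw
    have := hG.dist_eq_dist_add_one_of_adj_of_reachable v hw.symm hvx
    omega
  obtain ⟨p⟩ := hvx
  have hp : G.Adj p.penultimate x := p.adj_penultimate (Walk.not_nil_of_ne hne)
  refine deg_eq_one_iff_existsUnique_adj.2 ⟨p.penultimate, hp.symm, fun w hw ↦ ?_⟩
  exact eq_of_adj_of_dist_eq_dist_add_one hG hw.symm hp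
    (neighbor_closer w hw.symm) (neighbor_closer p.penultimate hp)

lemma exists_deg_eq_one_and_dist_eq_dist_add_dist [Finite V] (hG : G.IsAcyclic)
    (hvu : G.Reachable v u) (hne : v ≠ u) :
    ∃ x, deg G x = 1 ∧ G.dist v x = G.dist v u + G.dist u x := by
  obtain ⟨x, hx : G.dist v x = G.dist v u + G.dist u x, hmax⟩ :=
    Set.exists_max_image {x | G.dist v x = G.dist v u + G.dist u x} (G.dist v) (Set.toFinite _)
      ⟨u, by simp⟩
  have dist_pos : 0 < G.dist v u := hvu.pos_dist_of_ne hne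
  obtain ⟨hvx_ne, hvx⟩ : v ≠ x ∧ G.Reachable v x :=
    dist_ne_zero_iff_ne_and_reachable.1 (by omega)
  refine ⟨x, deg_eq_one_of_forall_adj_dist_le hG hvx hvx_ne fun w hw ↦ ?_, hx⟩
  by_contra! hlt
  have beyond : G.dist v w = G.dist v u + G.dist u w := by
    have := hG.dist_eq_dist_add_one_of_adj_of_reachable v hw.symm hvx
    have := hvu.dist_triangle_left w
    have := hw.symm.reachable.dist_triangle_right u
    have : G.dist x w = 1 := dist_eq_one_iff_adj.2 hw.symm
    omega
  exact hlt.not_ge (hmax w beyond)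

lemma isDoublyResolvingSet_setOf_deg_eq_one [Finite V] (hG : G.IsTree) :
    IsDoublyResolvingSet G {v | deg G v = 1} := by
  intro u v huv
  obtain ⟨x, hx, hvx⟩ := exists_deg_eq_one_and_dist_eq_dist_add_dist hG.isAcyclic
    (hG.connected v u) huv.symm
  obtain ⟨y, hy, huy⟩ := exists_deg_eq_one_and_dist_eq_dist_add_dist hG.isAcyclic
    (hG.connected u v) huv
  refine ⟨x, hx, y, hy, ?_⟩
  have := hG.connected.pos_dist_of_ne huv
  rw [dist_comm (u := v) (v := u)] at hvx
  omega

lemma IsDoublyResolvingSet.psi_eq_ncard_of_forall_subset [Finite V] (hS : IsDoublyResolvingSet G S)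
    (hmin : ∀ S', IsDoublyResolvingSet G S' → S ⊆ S') : psi G = S.ncard := by
  refine IsLeast.csInf_eq ⟨⟨S, hS, rfl⟩, ?_⟩
  rintro _ ⟨S', hS', rfl⟩
  exact Set.ncard_le_ncard (hmin S' hS')

end

/-- For a tree `T` with at least two vertices, `Ψ(T) = σ(T)`: the minimum
cardinality of a doubly resolving set of `T` equals the number of leaves of `T`. -/
theorem psi_tree_eq_leaves {V : Type*} [Fintype V] (T : SimpleGraph V)
    (hT : T.IsTree) (hcard : 2 ≤ Fintype.card V) :
    psi T = {v : V | deg T v = 1}.ncard := by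
  refine (isDoublyResolvingSet_setOf_deg_eq_one hT).psi_eq_ncard_of_forall_subset ?_
  exact fun S hS l hl ↦ hS.mem_of_deg_eq_one hT.connected.preconnected hl
end

section
/- Let T be a tree with at least three vertices. Then the metric dimension of the line graph of T equals the metric dimension of T, i.e., μ(L(T)) = μ(T). -/
open SimpleGraph

variable {V : Type*}

/-- `S` is a resolving set of `G`. -/
def IsResolvingSet (G : SimpleGraph V) (S : Set V) : Prop :=
  ∀ u v : V, u ≠ v → ∃ x ∈ S, G.dist u x ≠ G.dist v x

/-- `μ(G)`: the metric dimension of `G`, i.e., the minimum cardinality of a resolving set. -/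
noncomputable def metricDim (G : SimpleGraph V) : ℕ :=
  sInf {n | ∃ S : Set V, IsResolvingSet G S ∧ S.ncard = n}

/-!
Distances in `L(T)` are read off from distances between endpoints. A nonempty set `S` of vertices
that meets all branches but at most one at every vertex resolves `T`: a pair `u`, `w` that `S` does
not separate is at even distance, and `S` meets one of the two branches at the midpoint that contain
`u` or `w`. A set `R` of edges resolves `L(T)` as soon as its endpoints resolve `T` and `R` is not
a single edge without a leaf: two edges at even distance between their inner endpoints are separated
along with their outer endpoints, and for two edges at odd distance the only edge that may fail to
separate them is the middle edge of the path between them.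

Given `S` resolving `T`, pick one edge at each vertex of `S`, and a spare edge if the picks for
several vertices all coincide. Given `R` resolving `L(T)`, the endpoints of `R` meet all branches
but at most one at every vertex; keep from every edge the endpoint farther from a root `ρ`. This
loses nothing in the branches that avoid `ρ`, and `ρ` is chosen, between two edges of `R` or next
to a leaf, so that a branch containing `ρ` still contains an endpoint that is kept whenever another
branch starts at the same vertex.
-/

section Graph

variable {G : SimpleGraph V}

lemma ne_of_dist_eq_dist (hG : G.Preconnected) {u v x : V} (huv : u ≠ v)
    (h : G.dist u x = G.dist v x) : u ≠ x := by
  rintro rfl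
  rw [dist_self] at h
  exact ((hG v u).pos_dist_of_ne huv.symm).ne h

lemma metricDim_le_ncard {S : Set V} (hS : IsResolvingSet G S) : metricDim G ≤ S.ncard :=
  Nat.sInf_le ⟨S, hS, rfl⟩

lemma isResolvingSet_univ (hG : G.Preconnected) : IsResolvingSet G Set.univ := by
  intro u v huv
  exact ⟨u, Set.mem_univ u, fun h ↦ ne_of_dist_eq_dist hG huv h rfl⟩

lemma exists_isResolvingSet_ncard_eq_metricDim (hG : G.Preconnected) :
    ∃ S, IsResolvingSet G S ∧ S.ncard = metricDim G :=
  Nat.sInf_mem (s := {n | ∃ S, IsResolvingSet G S ∧ S.ncard = n})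
    ⟨_, _, isResolvingSet_univ hG, rfl⟩

lemma IsResolvingSet.nonempty [Nontrivial V] {S : Set V} (hS : IsResolvingSet G S) :
    S.Nonempty := by
  obtain ⟨u, v, huv⟩ := exists_pair_ne V
  obtain ⟨s, hs, -⟩ := hS u v huv
  exact ⟨s, hs⟩

lemma IsResolvingSet.mono {S S' : Set V} (hS : IsResolvingSet G S) (h : S ⊆ S') :
    IsResolvingSet G S' := by
  intro u v huv
  obtain ⟨s, hs, hne⟩ := hS u v huv
  exact ⟨s, h hs, hne⟩

lemma subsingleton_neighborSet_of_isResolvingSet_singleton {s : V}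
    (hs : IsResolvingSet G {s}) : (G.neighborSet s).Subsingleton := by
  intro a ha b hb
  by_contra hab
  obtain ⟨_, rfl, hne⟩ := hs a b hab
  exact hne (by rw [dist_eq_one_iff_adj.2 ha.symm, dist_eq_one_iff_adj.2 hb.symm])

lemma exists_dist_eq_and_dist_eq (hG : G.Connected) {u w : V} {m n : ℕ}
    (h : G.dist u w = m + n) : ∃ v, G.dist u v = m ∧ G.dist v w = n := by
  obtain ⟨walk, hwalk⟩ := hG.exists_walk_length_eq_dist u w
  have hle_left := dist_le (walk.take m)
  have hle_right := dist_le (walk.drop m)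
  have htriangle := hG.dist_triangle (u := u) (v := walk.getVert m) (w := w)
  rw [Walk.take_length] at hle_left
  rw [Walk.drop_length] at hle_right
  exact ⟨walk.getVert m, by omega, by omega⟩

lemma exists_lineGraph_walk_length_le {p x : V} (w : G.Walk p x) {e r : G.edgeSet}
    (hp : p ∈ e.1) (hx : x ∈ r.1) : ∃ W : G.lineGraph.Walk e r, W.length ≤ w.length + 1 := by
  induction w generalizing e with
  | @nil v =>
    by_cases her : e = r
    · subst her
      exact ⟨.nil, by simp⟩
    · exact ⟨.cons (lineGraph_adj_iff_exists.2 ⟨her, v, hp, hx⟩) .nil, by simp⟩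
  | @cons p c x hpc w ih =>
    obtain ⟨W, hW⟩ := ih (e := ⟨s(p, c), hpc⟩) (Sym2.mem_mk_right p c) hx
    by_cases he : e = ⟨s(p, c), hpc⟩
    · subst he
      exact ⟨W, hW.trans (by simp)⟩
    · exact ⟨.cons (lineGraph_adj_iff_exists.2 ⟨he, p, hp, Sym2.mem_mk_left p c⟩) W, by simpa⟩

lemma exists_walk_length_lt_of_lineGraph_walk {e r : G.edgeSet} (W : G.lineGraph.Walk e r)
    (her : e ≠ r) : ∃ p ∈ e.1, ∃ x ∈ r.1, ∃ w : G.Walk p x, w.length < W.length := by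
  induction W with
  | nil => exact absurd rfl her
  | @cons e b r heb W ih =>
    obtain ⟨-, v, hve, hvb⟩ := lineGraph_adj_iff_exists.1 heb
    by_cases hbr : b = r
    · subst hbr
      exact ⟨v, hve, v, hvb, .nil, by simp⟩
    · obtain ⟨p, hpb, x, hx, w, hw⟩ := ih hbr
      by_cases hvp : v = p
      · subst hvp
        exact ⟨v, hve, x, hx, w, hw.trans (by simp)⟩
      · have hadj : G.Adj v p := G.adj_iff_exists_edge.2 ⟨hvp, b.1, b.2, hvb, hpb⟩
        exact ⟨v, hve, x, hx, .cons hadj w, by simpa⟩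

lemma lineGraph_preconnected (hG : G.Preconnected) : G.lineGraph.Preconnected := by
  intro e r
  obtain ⟨w⟩ := hG e.1.out.1 r.1.out.1
  obtain ⟨W, -⟩ := exists_lineGraph_walk_length_le w e.1.out_fst_mem r.1.out_fst_mem
  exact ⟨W⟩

lemma lineGraph_dist_le (hG : G.Preconnected) {e r : G.edgeSet} {p x : V} (hp : p ∈ e.1)
    (hx : x ∈ r.1) : G.lineGraph.dist e r ≤ G.dist p x + 1 := by
  obtain ⟨w, hw⟩ := (hG p x).exists_walk_length_eq_dist
  obtain ⟨W, hW⟩ := exists_lineGraph_walk_length_le w hp hx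
  exact (dist_le W).trans (hw ▸ hW)

lemma exists_lineGraph_dist_eq (hG : G.Preconnected) {e r : G.edgeSet} (her : e ≠ r) :
    ∃ p ∈ e.1, ∃ x ∈ r.1, G.lineGraph.dist e r = G.dist p x + 1 := by
  obtain ⟨W, hW⟩ := (lineGraph_preconnected hG e r).exists_walk_length_eq_dist
  obtain ⟨p, hp, x, hx, w, hw⟩ := exists_walk_length_lt_of_lineGraph_walk W her
  exact ⟨p, hp, x, hx, (lineGraph_dist_le hG hp hx).antisymm (by grind [dist_le])⟩

lemma nontrivial_edgeSet [Fintype V] (hG : G.Connected) (hcard : 3 ≤ Fintype.card V) :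
    Nontrivial G.edgeSet := by
  have := hG.card_vert_le_card_edgeSet_add_one
  rw [Nat.card_eq_fintype_card] at this
  exact Finite.one_lt_card_iff_nontrivial.1 (by omega)

/-- The vertices covered by a set of edges. -/
def endpoints (R : Set G.edgeSet) : Set V :=
  {v | ∃ r ∈ R, v ∈ r.1}

lemma IsResolvingSet.nontrivial_or_exists_subsingleton_neighborSet {R : Set G.edgeSet}
    (hR : IsResolvingSet G.lineGraph R) (hne : R.Nonempty) :
    R.Nontrivial ∨ ∃ v ∈ endpoints R, (G.neighborSet v).Subsingleton := by
  refine hne.exists_eq_singleton_or_nontrivial.symm.imp_right ?_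
  rintro ⟨r, rfl⟩
  by_contra! hleaf
  have exists_adj_ne {x y : V} (hxy : r.1 = s(x, y)) : ∃ a, G.Adj x a ∧ a ≠ y :=
    (hleaf x ⟨r, rfl, by simp [hxy]⟩).exists_ne y
  obtain ⟨x, y, hxy⟩ : ∃ x y, r.1 = s(x, y) := ⟨_, _, r.1.out_eq.symm⟩
  obtain ⟨a, hxa, hay⟩ := exists_adj_ne hxy
  obtain ⟨b, hyb, hbx⟩ := exists_adj_ne (hxy.trans Sym2.eq_swap)
  have hadj : G.Adj x y := by simpa [hxy] using r.2
  have dist_xa : G.lineGraph.dist ⟨s(x, a), hxa⟩ r = 1 :=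
    dist_eq_one_iff_adj.2 (lineGraph_adj_iff_exists.2 ⟨by grind, x, by simp, by simp [hxy]⟩)
  have dist_yb : G.lineGraph.dist ⟨s(y, b), hyb⟩ r = 1 :=
    dist_eq_one_iff_adj.2 (lineGraph_adj_iff_exists.2 ⟨by grind, y, by simp, by simp [hxy]⟩)
  obtain ⟨_, rfl, hdist⟩ := hR ⟨s(x, a), hxa⟩ ⟨s(y, b), hyb⟩ (by grind [hadj.ne])
  exact hdist (dist_xa.trans dist_yb.symm)

end Graph

/-- For adjacent `v` and `a` in a tree, the branch at `v` through `a`: the component containing `a`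
after deleting `v`, encoded by distances as the vertices whose geodesic to `v` ends with `a`. -/
def branch (G : SimpleGraph V) (v a : V) : Set V :=
  {z | G.dist z v = G.dist z a + 1}

/-- `S` meets all branches but at most one at every vertex. -/
def MeetsBranchPairs (G : SimpleGraph V) (S : Set V) : Prop :=
  ∀ ⦃v a b⦄, G.Adj v a → G.Adj v b → a ≠ b → ∃ s ∈ S, s ∈ branch G v a ∨ s ∈ branch G v b

@[grind =]
lemma mem_branch {G : SimpleGraph V} {v a z : V} :
    z ∈ branch G v a ↔ G.dist z v = G.dist z a + 1 :=
  Iff.rfl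

lemma mem_branch_self {G : SimpleGraph V} {v a : V} (h : G.Adj v a) : a ∈ branch G v a := by
  rw [mem_branch, dist_self, dist_eq_one_iff_adj.2 h.symm]

lemma exists_adj_mem_branch {G : SimpleGraph V} (hG : G.Connected) {v z : V} (h : v ≠ z) :
    ∃ a, G.Adj v a ∧ z ∈ branch G v a := by
  have hpos := hG.pos_dist_of_ne h
  obtain ⟨a, hva, haz⟩ := exists_dist_eq_and_dist_eq hG (u := v) (w := z) (m := 1)
    (n := G.dist v z - 1) (by omega)
  exact ⟨a, dist_eq_one_iff_adj.1 hva, by grind [SimpleGraph.dist_comm]⟩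

section Tree

variable {T : SimpleGraph V} {a b p p' q q' s u v w x y z : V}

lemma mem_branch_or_mem_branch (hT : T.IsTree) (hva : T.Adj v a) (z : V) :
    z ∈ branch T v a ∨ z ∈ branch T a v :=
  hT.dist_eq_dist_add_one_of_adj z hva

lemma eq_of_mem_branch_of_mem_branch (hT : T.IsTree) (hva : T.Adj v a) (hvb : T.Adj v b)
    (ha : z ∈ branch T v a) (hb : z ∈ branch T v b) : a = b := by
  obtain ⟨path_a, hpath_a⟩ := hT.connected.exists_walk_length_eq_dist z a
  obtain ⟨path_b, hpath_b⟩ := hT.connected.exists_walk_length_eq_dist z b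
  have isPath_a : (path_a.concat hva.symm).IsPath :=
    Walk.isPath_of_length_eq_dist _ (by grind [Walk.length_concat])
  have isPath_b : (path_b.concat hvb.symm).IsPath :=
    Walk.isPath_of_length_eq_dist _ (by grind [Walk.length_concat])
  have hpath := (hT.existsUnique_path z v).unique isPath_a isPath_b
  simpa using congrArg Walk.penultimate hpath

lemma dist_eq_of_mem_branch (hT : T.IsTree) (huv : T.Adj u v) (hs : s ∈ branch T v u)
    (hw : w ∈ branch T u v) : T.dist s w = T.dist s u + 1 + T.dist v w := by
  induction hn : T.dist v w generalizing u v with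
  | zero =>
    obtain rfl := hT.connected.dist_eq_zero_iff.1 hn
    exact hs
  | succ n ih =>
    have hvw : v ≠ w := by
      rintro rfl
      simp at hn
    obtain ⟨c, hvc, hc⟩ := exists_adj_mem_branch hT.connected hvw
    have hsc : s ∈ branch T c v := by
      refine (mem_branch_or_mem_branch hT hvc s).resolve_left fun hsc ↦ ?_
      obtain rfl := eq_of_mem_branch_of_mem_branch hT hvc huv.symm hsc hs
      grind
    have := ih hvc hsc hc (by grind [SimpleGraph.dist_comm])
    grind

lemma eq_and_eq_of_adj_of_mem_branch (hT : T.IsTree) (huv : T.Adj u v) (hsw : T.Adj s w)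
    (hs : s ∈ branch T v u) (hw : w ∈ branch T u v) : s = u ∧ w = v := by
  have hdist := dist_eq_of_mem_branch hT huv hs hw
  rw [dist_eq_one_iff_adj.2 hsw] at hdist
  exact ⟨hT.connected.dist_eq_zero_iff.1 (by omega),
    (hT.connected.dist_eq_zero_iff.1 (by omega)).symm⟩

lemma even_dist_add_dist_add_dist (hT : T.IsTree) (s p q : V) :
    Even (T.dist s p + T.dist s q + T.dist p q) := by
  obtain ⟨w⟩ := hT.connected.preconnected p q
  induction w with
  | nil => simp
  | @cons a b c hab _ ih =>
    have hs := hT.dist_eq_dist_add_one_of_adj s hab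
    have hc := hT.dist_eq_dist_add_one_of_adj c hab
    grind [SimpleGraph.dist_comm]

lemma dist_lt_dist_of_mem_branch (hT : T.IsTree) (hva : T.Adj v a) (hs : s ∈ branch T v a)
    (hu : u ∈ branch T v a) (hw : w ∉ branch T v a) (huw : T.dist u v = T.dist w v) :
    T.dist s u < T.dist s w := by
  have hw' := (mem_branch_or_mem_branch hT hva w).resolve_left hw
  have hsw := dist_eq_of_mem_branch hT hva.symm hs hw'
  have hsu := hT.connected.dist_triangle (u := s) (v := a) (w := u)
  grind [SimpleGraph.dist_comm]

lemma MeetsBranchPairs.isResolvingSet (hT : T.IsTree) {S : Set V} (hne : S.Nonempty)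
    (hS : MeetsBranchPairs T S) : IsResolvingSet T S := by
  intro u w huw
  by_contra! hall
  obtain ⟨s₀, hs₀⟩ := hne
  have hpos := hT.connected.pos_dist_of_ne huw
  have hparity := even_dist_add_dist_add_dist hT s₀ u w
  obtain ⟨n, hn⟩ : Even (T.dist u w) := by grind [SimpleGraph.dist_comm]
  obtain ⟨v, huv, hvw⟩ := exists_dist_eq_and_dist_eq hT.connected hn
  obtain ⟨a, hva, ha⟩ := exists_adj_mem_branch hT.connected (v := v) (z := u) (by grind)
  obtain ⟨b, hvb, hb⟩ := exists_adj_mem_branch hT.connected (v := v) (z := w) (by grind)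
  have hab : a ≠ b := by
    rintro rfl
    have := hT.connected.dist_triangle (u := u) (v := a) (w := w)
    grind [SimpleGraph.dist_comm]
  obtain ⟨s, hs, hsa | hsb⟩ := hS hva hvb hab
  · have := dist_lt_dist_of_mem_branch hT hva hsa ha
      (fun hwa ↦ hab (eq_of_mem_branch_of_mem_branch hT hva hvb hwa hb))
      (by grind [SimpleGraph.dist_comm])
    grind [SimpleGraph.dist_comm]
  · have := dist_lt_dist_of_mem_branch hT hvb hsb hb
      (fun hub ↦ hab (eq_of_mem_branch_of_mem_branch hT hva hvb ha hub))
      (by grind [SimpleGraph.dist_comm])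
    grind [SimpleGraph.dist_comm]

/-- `pp'` and `qq'` are edges of a tree that face each other through `p` and `q`: each of them lies
on the inner side of the other, so `p', p, …, q, q'` is a path, with `p = q` allowed. -/
structure FacingEdges (G : SimpleGraph V) (p p' q q' : V) : Prop where
  adj_left : G.Adj p p'
  adj_right : G.Adj q q'
  inner_left : p ∈ branch G q' q
  outer_left : p' ∈ branch G q' q
  inner_right : q ∈ branch G p' p
  outer_right : q' ∈ branch G p' p

lemma FacingEdges.symm (h : FacingEdges T p p' q q') : FacingEdges T q q' p p' :=
  ⟨h.adj_right, h.adj_left, h.inner_right, h.outer_right, h.inner_left, h.outer_left⟩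

lemma FacingEdges.edge_ne (h : FacingEdges T p p' q q') : s(p, p') ≠ s(q, q') := by
  have := h.inner_left
  have := h.outer_left
  grind

lemma exists_facingEdges (hT : T.IsTree) {e f : T.edgeSet} (hef : e ≠ f) :
    ∃ p p' q q', e.1 = s(p, p') ∧ f.1 = s(q, q') ∧ FacingEdges T p p' q q' ∧
      T.lineGraph.dist e f = T.dist p q + 1 := by
  have hconn := hT.connected.preconnected
  obtain ⟨p, hp, q, hq, hdist⟩ := exists_lineGraph_dist_eq hconn hef
  obtain ⟨p', he⟩ := Sym2.mem_iff_exists.1 hp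
  obtain ⟨q', hf⟩ := Sym2.mem_iff_exists.1 hq
  have hpp' : T.Adj p p' := by simpa [he] using e.2
  have hqq' : T.Adj q q' := by simpa [hf] using f.2
  have hne : ¬ (p = q ∧ p' = q') := by
    rintro ⟨rfl, rfl⟩
    exact hef (Subtype.ext (he.trans hf.symm))
  have inner_left : p ∈ branch T q' q := by
    have := lineGraph_dist_le hconn hp (r := f) (x := q') (by simp [hf])
    have := hT.dist_eq_dist_add_one_of_adj p hqq'
    grind
  have inner_right : q ∈ branch T p' p := by
    have := lineGraph_dist_le hconn hq (r := e) (x := p') (by simp [he])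
    have := hT.dist_eq_dist_add_one_of_adj q hpp'
    grind [SimpleGraph.dist_comm]
  have outer_left : p' ∈ branch T q' q :=
    (mem_branch_or_mem_branch hT hqq' p').resolve_left fun h ↦
      hne (eq_and_eq_of_adj_of_mem_branch hT hqq' hpp' inner_left h)
  have outer_right : q' ∈ branch T p' p :=
    (mem_branch_or_mem_branch hT hpp' q').resolve_left fun h ↦
      hne ((eq_and_eq_of_adj_of_mem_branch hT hpp' hqq' inner_right h).imp .symm .symm)
  exact ⟨p, p', q, q', he, hf, ⟨hpp', hqq', inner_left, outer_left, inner_right, outer_right⟩,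
    hdist⟩

-- With `d + 1` the distance of the edges, the four distances are `d`, `d + 1`, `d + 1`, `d + 2`.
lemma four_mul_lineGraph_dist (hT : T.IsTree) {e r : T.edgeSet} (her : e ≠ r)
    (he : e.1 = s(p, p')) (hr : r.1 = s(x, y)) :
    4 * T.lineGraph.dist e r = T.dist x p + T.dist x p' + T.dist y p + T.dist y p' := by
  obtain ⟨a, a', b, b', he', hr', hfacing, hdist⟩ := exists_facingEdges hT her
  have := hfacing.inner_left
  have := hfacing.inner_right
  have := hfacing.outer_left
  have := Sym2.eq_iff.1 (he.symm.trans he')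
  have := Sym2.eq_iff.1 (hr.symm.trans hr')
  grind [SimpleGraph.dist_comm]

section Equidistant

variable {e f r : T.edgeSet}

lemma FacingEdges.mem_branch_of_lineGraph_dist_eq (h : FacingEdges T p p' q q') (hT : T.IsTree)
    (he : e.1 = s(p, p')) (hf : f.1 = s(q, q'))
    (hr : r.1 = s(x, y)) (hdist : T.lineGraph.dist e r = T.lineGraph.dist f r) :
    x ∈ branch T p' p := by
  have hef : e ≠ f := fun hef ↦ h.edge_ne (by rw [← he, ← hf, hef])
  have hconn := lineGraph_preconnected hT.connected.preconnected
  have her : e ≠ r := ne_of_dist_eq_dist hconn hef hdist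
  have hfr : f ≠ r := ne_of_dist_eq_dist hconn hef.symm hdist.symm
  by_contra hx
  replace hx := (mem_branch_or_mem_branch hT h.adj_left x).resolve_right hx
  have hxy : T.Adj x y := by simpa [hr] using r.2
  have hy : y ∈ branch T p p' := by
    refine (mem_branch_or_mem_branch hT h.adj_left y).resolve_right fun hy ↦ her (Subtype.ext ?_)
    obtain ⟨rfl, rfl⟩ := eq_and_eq_of_adj_of_mem_branch hT h.adj_left hxy.symm hy hx
    rw [he, hr, Sym2.eq_swap]
  have dist_past_p {z t : V} (hz : z ∈ branch T p p') (ht : t ∈ branch T p' p) :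
      T.dist z p < T.dist z t + 1 ∧ T.dist z p' < T.dist z t := by
    grind [dist_eq_of_mem_branch hT h.adj_left.symm hz ht]
  have := four_mul_lineGraph_dist hT her he hr
  have := four_mul_lineGraph_dist hT hfr hf hr
  have := dist_past_p hx h.inner_right
  have := dist_past_p hx h.outer_right
  have := dist_past_p hy h.inner_right
  have := dist_past_p hy h.outer_right
  omega

lemma FacingEdges.dist_add_dist_eq (h : FacingEdges T p p' q q') (hT : T.IsTree)
    (he : e.1 = s(p, p')) (hf : f.1 = s(q, q')) (hr : r.1 = s(x, y))
    (hdist : T.lineGraph.dist e r = T.lineGraph.dist f r) :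
    T.dist x p + T.dist y p = T.dist x q + T.dist y q := by
  have hef : e ≠ f := fun hef ↦ h.edge_ne (by rw [← he, ← hf, hef])
  have hconn := lineGraph_preconnected hT.connected.preconnected
  have := four_mul_lineGraph_dist hT (ne_of_dist_eq_dist hconn hef hdist) he hr
  have := four_mul_lineGraph_dist hT (ne_of_dist_eq_dist hconn hef.symm hdist.symm) hf hr
  have hr' : r.1 = s(y, x) := hr.trans Sym2.eq_swap
  have := h.mem_branch_of_lineGraph_dist_eq hT he hf hr hdist
  have := h.mem_branch_of_lineGraph_dist_eq hT he hf hr' hdist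
  have := h.symm.mem_branch_of_lineGraph_dist_eq hT hf he hr hdist.symm
  have := h.symm.mem_branch_of_lineGraph_dist_eq hT hf he hr' hdist.symm
  grind

lemma FacingEdges.dist_outer_eq_dist_outer (h : FacingEdges T p p' q q') (hT : T.IsTree)
    (heven : Even (T.dist p q)) (he : e.1 = s(p, p')) (hf : f.1 = s(q, q')) (hx : x ∈ r.1)
    (hdist : T.lineGraph.dist e r = T.lineGraph.dist f r) : T.dist x p' = T.dist x q' := by
  obtain ⟨y, hr⟩ := Sym2.mem_iff_exists.1 hx
  have hxy : T.Adj x y := by simpa [hr] using r.2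
  have := h.mem_branch_of_lineGraph_dist_eq hT he hf hr hdist
  have := h.symm.mem_branch_of_lineGraph_dist_eq hT hf he hr hdist.symm
  have := h.dist_add_dist_eq hT he hf hr hdist
  have := even_dist_add_dist_add_dist hT x p q
  have := hT.dist_eq_dist_add_one_of_adj p hxy
  have := hT.dist_eq_dist_add_one_of_adj q hxy
  grind [SimpleGraph.dist_comm]

end Equidistant

/-- `xy` is the middle edge of the path from `p` to `q` in a tree, with `x` on the side of `p`. -/
structure IsMiddleEdge (G : SimpleGraph V) (p q x y : V) : Prop where
  adj : G.Adj x y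
  left_mem : p ∈ branch G y x
  right_mem : q ∈ branch G x y
  dist_eq : G.dist p x = G.dist q y

lemma IsMiddleEdge.symm (h : IsMiddleEdge T p q x y) : IsMiddleEdge T q p y x :=
  ⟨h.adj.symm, h.right_mem, h.left_mem, h.dist_eq.symm⟩

lemma IsMiddleEdge.left_unique (hT : T.IsTree) (hxy : IsMiddleEdge T p q x y)
    (hzw : IsMiddleEdge T p q z w) : x = z := by
  have hpq := dist_eq_of_mem_branch hT hxy.adj hxy.left_mem hxy.right_mem
  have hpq' := dist_eq_of_mem_branch hT hzw.adj hzw.left_mem hzw.right_mem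
  have hxy_dist := hxy.dist_eq
  have hzw_dist := hzw.dist_eq
  have hzq := hzw.right_mem
  rcases mem_branch_or_mem_branch hT hxy.adj z with hz | hz
  · have := dist_eq_of_mem_branch hT hxy.adj hxy.left_mem hz
    grind [SimpleGraph.dist_comm]
  · have := dist_eq_of_mem_branch hT hxy.adj hz hxy.right_mem
    exact (hT.connected.dist_eq_zero_iff.1 (by grind [SimpleGraph.dist_comm])).symm

lemma IsMiddleEdge.edge_unique (hT : T.IsTree) (hxy : IsMiddleEdge T p q x y)
    (hzw : IsMiddleEdge T p q z w) : s(x, y) = s(z, w) := by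
  rw [hxy.left_unique hT hzw, hxy.symm.left_unique hT hzw.symm]

lemma not_subsingleton_neighborSet_of_mem_branch (hT : T.IsTree) (hxy : T.Adj x y)
    (hz : z ∈ branch T y x) (hxz : x ≠ z) : ¬ (T.neighborSet x).Subsingleton := by
  intro hsub
  obtain ⟨c, hxc, hc⟩ := exists_adj_mem_branch hT.connected hxz
  obtain rfl := hsub hxc hxy
  grind

lemma FacingEdges.isMiddleEdge (h : FacingEdges T p p' q q') (hT : T.IsTree)
    (hodd : Odd (T.dist p q)) {e f r : T.edgeSet} (he : e.1 = s(p, p')) (hf : f.1 = s(q, q'))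
    (hx : x ∈ r.1) (hdist : T.lineGraph.dist e r = T.lineGraph.dist f r) :
    ∃ y, r.1 = s(x, y) ∧ (IsMiddleEdge T p q x y ∨ IsMiddleEdge T p q y x) := by
  obtain ⟨y, hr⟩ := Sym2.mem_iff_exists.1 hx
  have hxy : T.Adj x y := by simpa [hr] using r.2
  have hsum := h.dist_add_dist_eq hT he hf hr hdist
  have hparity := even_dist_add_dist_add_dist hT x p q
  refine ⟨y, hr, ?_⟩
  rcases mem_branch_or_mem_branch hT hxy p with hp | hp <;>
  rcases mem_branch_or_mem_branch hT hxy q with hq | hq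
  · grind [SimpleGraph.dist_comm]
  · exact .inr ⟨hxy.symm, hp, hq, by grind [SimpleGraph.dist_comm]⟩
  · exact .inl ⟨hxy, hp, hq, by grind [SimpleGraph.dist_comm]⟩
  · grind [SimpleGraph.dist_comm]

lemma FacingEdges.not_subsingleton_neighborSet (h : FacingEdges T p p' q q') (hT : T.IsTree)
    (hodd : Odd (T.dist p q)) {e f r : T.edgeSet} (he : e.1 = s(p, p')) (hf : f.1 = s(q, q'))
    (hx : x ∈ r.1) (hdist : T.lineGraph.dist e r = T.lineGraph.dist f r) :
    ¬ (T.neighborSet x).Subsingleton := by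
  obtain ⟨y, hr, hmiddle⟩ := h.isMiddleEdge hT hodd he hf hx hdist
  have hr' : r.1 = s(y, x) := hr.trans Sym2.eq_swap
  have := h.mem_branch_of_lineGraph_dist_eq hT he hf hr hdist
  have := h.mem_branch_of_lineGraph_dist_eq hT he hf hr' hdist
  have := h.symm.mem_branch_of_lineGraph_dist_eq hT hf he hr hdist.symm
  have := h.symm.mem_branch_of_lineGraph_dist_eq hT hf he hr' hdist.symm
  rcases hmiddle with hmiddle | hmiddle
  · have := hmiddle.left_mem
    exact not_subsingleton_neighborSet_of_mem_branch hT hmiddle.adj (z := p')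
      (by grind [SimpleGraph.dist_comm]) (by grind)
  · have := hmiddle.right_mem
    exact not_subsingleton_neighborSet_of_mem_branch hT hmiddle.adj.symm (z := q')
      (by grind [SimpleGraph.dist_comm]) (by grind)

lemma isResolvingSet_lineGraph_of_endpoints (hT : T.IsTree) {R : Set T.edgeSet}
    (hR : IsResolvingSet T (endpoints R))
    (hR' : R.Nontrivial ∨ ∃ v ∈ endpoints R, (T.neighborSet v).Subsingleton) :
    IsResolvingSet T.lineGraph R := by
  intro e f hef
  by_contra! hall
  obtain ⟨p, p', q, q', he, hf, hfacing, -⟩ := exists_facingEdges hT hef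
  rcases Nat.even_or_odd (T.dist p q) with heven | hodd
  · have hp'q' : p' ≠ q' := by
      have := hfacing.outer_left
      grind
    obtain ⟨x, ⟨r, hr, hxr⟩, hx⟩ := hR p' q' hp'q'
    have := hfacing.dist_outer_eq_dist_outer hT heven he hf hxr (hall r hr)
    grind [SimpleGraph.dist_comm]
  · have middle (r) (hr : r ∈ R) : ∃ x y, r.1 = s(x, y) ∧ IsMiddleEdge T p q x y := by
      obtain ⟨y, hxy, h | h⟩ :=
        hfacing.isMiddleEdge hT hodd he hf r.1.out_fst_mem (hall r hr)
      · exact ⟨_, _, hxy, h⟩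
      · exact ⟨_, _, hxy.trans Sym2.eq_swap, h⟩
    rcases hR' with ⟨r, hr, r', hr', hne⟩ | ⟨v, ⟨r, hr, hvr⟩, hleaf⟩
    · obtain ⟨x, y, hxy, hmiddle⟩ := middle r hr
      obtain ⟨z, w, hzw, hmiddle'⟩ := middle r' hr'
      exact hne (Subtype.ext (by rw [hxy, hzw, hmiddle.edge_unique hT hmiddle']))
    · exact hfacing.not_subsingleton_neighborSet hT hodd he hf hvr (hall r hr) hleaf

lemma IsResolvingSet.meetsBranchPairs_endpoints (hT : T.IsTree) {R : Set T.edgeSet}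
    (hR : IsResolvingSet T.lineGraph R) : MeetsBranchPairs T (endpoints R) := by
  intro v a b hva hvb hab
  by_contra! hmiss
  obtain ⟨r, hr, hne⟩ := hR ⟨s(v, a), hva⟩ ⟨s(v, b), hvb⟩ (by grind)
  have hnot_mem {z : V} (hz : z ∈ r.1) : z ∉ branch T v a ∧ z ∉ branch T v b :=
    hmiss z ⟨r, hr, hz⟩
  have hne_edge {c : V} (hvc : T.Adj v c) (hc : c ∈ r.1 → c ∉ branch T v c) :
      (⟨s(v, c), hvc⟩ : T.edgeSet) ≠ r := by
    rintro rfl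
    exact hc (Sym2.mem_mk_right v c) (mem_branch_self hvc)
  obtain ⟨x, y, hxy⟩ : ∃ x y, r.1 = s(x, y) := ⟨_, _, r.1.out_eq.symm⟩
  have hx := hnot_mem (z := x) (by simp [hxy])
  have hy := hnot_mem (z := y) (by simp [hxy])
  have := four_mul_lineGraph_dist hT (hne_edge hva fun h ↦ (hnot_mem h).1) rfl hxy
  have := four_mul_lineGraph_dist hT (hne_edge hvb fun h ↦ (hnot_mem h).2) rfl hxy
  have := mem_branch_or_mem_branch hT hva x
  have := mem_branch_or_mem_branch hT hva y
  have := mem_branch_or_mem_branch hT hvb x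
  have := mem_branch_or_mem_branch hT hvb y
  grind

/-- `z` is the endpoint of the edge `e` of a tree that lies farther from the vertex `ρ`. -/
def IsFarEnd (G : SimpleGraph V) (ρ : V) (e : G.edgeSet) (z : V) : Prop :=
  ∃ c, e.1 = s(z, c) ∧ ρ ∈ branch G z c

lemma exists_isFarEnd (hT : T.IsTree) (ρ : V) (e : T.edgeSet) : ∃ z, IsFarEnd T ρ e z := by
  obtain ⟨⟨x, y⟩, hxy⟩ := e
  rcases mem_branch_or_mem_branch hT hxy ρ with h | h
  · exact ⟨x, y, rfl, h⟩
  · exact ⟨y, x, Sym2.eq_swap, h⟩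

lemma IsFarEnd.eq {ρ : V} {e : T.edgeSet} (h : IsFarEnd T ρ e z) (he : e.1 = s(x, y))
    (hρ : ρ ∈ branch T x y) : z = x := by
  obtain ⟨c, hc, hρc⟩ := h
  have := Sym2.eq_iff.1 (hc.symm.trans he)
  grind

lemma IsFarEnd.mem_branch (hT : T.IsTree) {ρ : V} {e : T.edgeSet} (h : IsFarEnd T ρ e z)
    (hx : x ∈ e.1) (hva : T.Adj v a) (hxa : x ∈ branch T v a) (hρ : ρ ∉ branch T v a) :
    z ∈ branch T v a := by
  obtain ⟨c, hc, hρc⟩ := h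
  have hzc : T.Adj z c := by simpa [hc] using e.2
  obtain rfl | rfl : x = z ∨ x = c := by simpa [hc] using hx
  · exact hxa
  · refine (mem_branch_or_mem_branch hT hva z).resolve_right fun hz ↦ hρ ?_
    obtain ⟨rfl, rfl⟩ := eq_and_eq_of_adj_of_mem_branch hT hva hzc hz hxa
    exact hρc

lemma MeetsBranchPairs.image_of_isFarEnd (hT : T.IsTree) {R : Set T.edgeSet} {ρ : V}
    {far : T.edgeSet → V} (hfar : ∀ e, IsFarEnd T ρ e (far e))
    (hR : MeetsBranchPairs T (endpoints R))
    (hroot : ∀ ⦃v a b⦄, T.Adj v a → T.Adj v b → a ≠ b → ρ ∈ branch T v a →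
      ∃ e ∈ R, far e ∈ branch T v a) :
    MeetsBranchPairs T (far '' R) := by
  intro v a b hva hvb hab
  by_cases hρa : ρ ∈ branch T v a
  · obtain ⟨e, he, hea⟩ := hroot hva hvb hab hρa
    exact ⟨far e, ⟨e, he, rfl⟩, .inl hea⟩
  by_cases hρb : ρ ∈ branch T v b
  · obtain ⟨e, he, heb⟩ := hroot hvb hva hab.symm hρb
    exact ⟨far e, ⟨e, he, rfl⟩, .inr heb⟩
  obtain ⟨z, ⟨e, he, hz⟩, hzab⟩ := hR hva hvb hab
  exact ⟨far e, ⟨e, he, rfl⟩, hzab.imp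
    (fun h ↦ (hfar e).mem_branch hT hz hva h hρa) (fun h ↦ (hfar e).mem_branch hT hz hvb h hρb)⟩

lemma FacingEdges.outer_left_or_outer_right_mem_branch (h : FacingEdges T p p' q q') (hT : T.IsTree)
    (hva : T.Adj v a) (hp : p ∈ branch T v a) : p' ∈ branch T v a ∨ q' ∈ branch T v a := by
  by_contra! hnot
  have hp' := (mem_branch_or_mem_branch hT hva p').resolve_left hnot.1
  have hq' := (mem_branch_or_mem_branch hT hva q').resolve_left hnot.2
  obtain ⟨rfl, rfl⟩ := eq_and_eq_of_adj_of_mem_branch hT hva.symm h.adj_left hp hp'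
  exact hnot.2 h.outer_right

lemma exists_meetsBranchPairs_image_of_nontrivial (hT : T.IsTree) {R : Set T.edgeSet}
    (hR : MeetsBranchPairs T (endpoints R)) (hnontrivial : R.Nontrivial) :
    ∃ far : T.edgeSet → V, MeetsBranchPairs T (far '' R) := by
  obtain ⟨e, he, f, hf, hef⟩ := hnontrivial
  obtain ⟨p, p', q, q', hep, hfq, hfacing, -⟩ := exists_facingEdges hT hef
  choose far hfar using exists_isFarEnd hT p
  have far_e : far e = p' := (hfar e).eq (hep.trans Sym2.eq_swap)
    (mem_branch_self hfacing.adj_left.symm)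
  have far_f : far f = q' := (hfar f).eq (hfq.trans Sym2.eq_swap) hfacing.inner_left
  refine ⟨far, hR.image_of_isFarEnd hT hfar fun v a b hva _ _ hp ↦ ?_⟩
  rcases hfacing.outer_left_or_outer_right_mem_branch hT hva hp with h | h
  · exact ⟨e, he, far_e ▸ h⟩
  · exact ⟨f, hf, far_f ▸ h⟩

lemma exists_meetsBranchPairs_image_of_subsingleton_neighborSet (hT : T.IsTree)
    {R : Set T.edgeSet} (hR : MeetsBranchPairs T (endpoints R)) (hx : x ∈ endpoints R)
    (hleaf : (T.neighborSet x).Subsingleton) :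
    ∃ far : T.edgeSet → V, MeetsBranchPairs T (far '' R) := by
  obtain ⟨r, hr, hxr⟩ := hx
  obtain ⟨y, hxy⟩ := Sym2.mem_iff_exists.1 hxr
  have hadj : T.Adj x y := by simpa [hxy] using r.2
  choose far hfar using exists_isFarEnd hT y
  have far_r : far r = x := (hfar r).eq hxy (mem_branch_self hadj)
  refine ⟨far, hR.image_of_isFarEnd hT hfar fun v a b hva hvb hab hy ↦ ⟨r, hr, far_r ▸ ?_⟩⟩
  refine (mem_branch_or_mem_branch hT hva x).resolve_right fun h ↦ hab ?_
  obtain ⟨-, rfl⟩ := eq_and_eq_of_adj_of_mem_branch hT hva.symm hadj.symm hy h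
  exact hleaf hva hvb

lemma exists_isResolvingSet_lineGraph_ncard_le [Nontrivial T.edgeSet] (hT : T.IsTree) {S : Set V}
    (hS : IsResolvingSet T S) (hfin : S.Finite) :
    ∃ R : Set T.edgeSet, IsResolvingSet T.lineGraph R ∧ R.ncard ≤ S.ncard := by
  have : Nontrivial V := by
    obtain ⟨⟨⟨x, y⟩, hxy⟩, -⟩ := exists_pair_ne T.edgeSet
    exact ⟨x, y, T.ne_of_adj hxy⟩
  have exists_edge (v : V) : ∃ e : T.edgeSet, v ∈ e.1 := by
    obtain ⟨c, hvc⟩ := hT.connected.preconnected.exists_adj_of_nontrivial v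
    exact ⟨⟨s(v, c), hvc⟩, Sym2.mem_mk_left v c⟩
  choose g hg using exists_edge
  have hsub {R : Set T.edgeSet} (hR : g '' S ⊆ R) : IsResolvingSet T (endpoints R) :=
    hS.mono fun v hv ↦ ⟨g v, hR ⟨v, hv, rfl⟩, hg v⟩
  obtain ⟨s, rfl⟩ | hnontrivial := hS.nonempty.exists_eq_singleton_or_nontrivial
  · refine ⟨{g s}, isResolvingSet_lineGraph_of_endpoints hT (hsub (by simp)) (.inr ?_), by simp⟩
    exact ⟨s, ⟨g s, rfl, hg s⟩, subsingleton_neighborSet_of_isResolvingSet_singleton hS⟩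
  obtain hsubsingleton | himage := (g '' S).subsingleton_or_nontrivial
  · obtain ⟨s, hs⟩ := hS.nonempty
    obtain ⟨f, hf⟩ := exists_ne (g s)
    refine ⟨{g s, f}, isResolvingSet_lineGraph_of_endpoints hT (hsub ?_)
      (.inl (Set.nontrivial_pair hf.symm)), ?_⟩
    · rintro _ he
      exact .inl (hsubsingleton he ⟨s, hs, rfl⟩)
    · rw [Set.ncard_pair hf.symm]
      exact (Set.one_lt_ncard hfin).2 hnontrivial
  · exact ⟨g '' S, isResolvingSet_lineGraph_of_endpoints hT (hsub subset_rfl) (.inl himage),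
      Set.ncard_image_le hfin⟩

lemma exists_isResolvingSet_ncard_le_of_lineGraph (hT : T.IsTree) {R : Set T.edgeSet}
    (hR : IsResolvingSet T.lineGraph R) (hne : R.Nonempty) (hfin : R.Finite) :
    ∃ S : Set V, IsResolvingSet T S ∧ S.ncard ≤ R.ncard := by
  have hmeets := hR.meetsBranchPairs_endpoints hT
  obtain ⟨far, hfar⟩ : ∃ far : T.edgeSet → V, MeetsBranchPairs T (far '' R) := by
    rcases hR.nontrivial_or_exists_subsingleton_neighborSet hne with hR' | ⟨x, hx, hleaf⟩
    · exact exists_meetsBranchPairs_image_of_nontrivial hT hmeets hR'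
    · exact exists_meetsBranchPairs_image_of_subsingleton_neighborSet hT hmeets hx hleaf
  exact ⟨far '' R, hfar.isResolvingSet hT (hne.image far), Set.ncard_image_le hfin⟩

end Tree

/-- For a tree `T` with at least three vertices, the metric dimension of the
line graph of `T` equals the metric dimension of `T`: `μ(L(T)) = μ(T)`. -/
theorem metricDim_lineGraph_tree {V : Type*} [Fintype V] (T : SimpleGraph V)
    (hT : T.IsTree) (hcard : 3 ≤ Fintype.card V) :
    metricDim T.lineGraph = metricDim T := by
  have : Nontrivial T.edgeSet := nontrivial_edgeSet hT.connected hcard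
  have hconn := hT.connected.preconnected
  apply le_antisymm
  · obtain ⟨S, hS, hS_card⟩ := exists_isResolvingSet_ncard_eq_metricDim hconn
    obtain ⟨R, hR, hRS⟩ := exists_isResolvingSet_lineGraph_ncard_le hT hS S.toFinite
    exact hS_card ▸ (metricDim_le_ncard hR).trans hRS
  · obtain ⟨R, hR, hR_card⟩ :=
      exists_isResolvingSet_ncard_eq_metricDim (lineGraph_preconnected hconn)
    obtain ⟨S, hS, hSR⟩ :=
      exists_isResolvingSet_ncard_le_of_lineGraph hT hR hR.nonempty R.toFinite
    exact hR_card ▸ (metricDim_le_ncard hS).trans hSR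
end
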